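/- arXiv:2201.01031 — 2 statements merged into one kernel-verified Lean document; each statement's English description precedes it below -/
import Mathlib

section
/- Let F be a finite field, let s,ℓ,k ≥ 1, and let α,β,γ be nonzero elements of F; let r and r' be the multiplicative orders of γ and β. Assume ω ∈ F has multiplicative order rk with ω^k = γ, and θ ∈ F has multiplicative order r'ℓ with θ^ℓ = β. Let R := F[x,y,z]/⟨x^s−α, y^ℓ−β, z^k−γ⟩ with quotient map π, and let ζ_t(z) := ∏_{t'≠t}(z − ω^{1+t'r})/(ω^{1+tr} − ω^{1+t'r}) for 0 ≤ t ≤ k−1 and η_j(y) := ∏_{j'≠j}(y − θ^{1+j'r'})/(θ^{1+jr'} − θ^{1+j'r'}) for 0 ≤ j ≤ ℓ−1. For 0 ≤ t ≤ k−1 and 0 ≤ j ≤ ℓ−1 let p_j^{(t)} ∈ F[x] be a monic divisor of x^s − α of degree a_{t,j}, and let C be the ideal of R generated by the elements π(ζ_t(z)·η_j(y)·p_j^{(t)}(x)). Then the dimension of C as an F-vector space equals sℓk − Σ_{t=0}^{k−1} Σ_{j=0}^{ℓ−1} a_{t,j}. -/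
/-!
The exponents are chosen so that the nodes `ω^{1+tr}` (`0 ≤ t < k`) are the `k` distinct roots of
`z^k − γ`, and likewise the `θ^{1+jr'}` are the `l` distinct roots of `y^l − β`. Hence the products
`e_{tj} = ζ_t(z) η_j(y)` of Lagrange basis polynomials become idempotents of `R` which sum to `1`
and on which `z` and `y` act as the scalars `ω^{1+tr}` and `θ^{1+jr'}`; so
`f · e_{tj} = f(x, θ^{1+jr'}, ω^{1+tr}) · e_{tj}` for every `f` (`mul_idem`).

Evaluating at all pairs of nodes gives a surjection `R → ∏_{t,j} F[x]/(p_j^{(t)})`, whose kernel is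
`C` by that identity; therefore `dim R/C = ∑ a_{t,j}` (`finrank_code_add`). Applied to
`p_j^{(t)} = x^s − α` for all `t, j`, when `C = 0`, the same computation gives `dim R = slk`.
-/

set_option synthInstance.maxHeartbeats 1000000

open Polynomial

/-- The Lagrange interpolation polynomial `ζ_t` at the `k` points `ω^{1+t'r}`,
`0 ≤ t' ≤ k−1`. -/
noncomputable def zetaPoly {F : Type*} [Field F] (ω : F) (r k t : ℕ) : Polynomial F :=
  ∏ t' ∈ (Finset.range k).erase t,
    (C ((ω ^ (1 + t * r) - ω ^ (1 + t' * r))⁻¹) * (X - C (ω ^ (1 + t' * r))))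

/-- The ideal `⟨x^s − α, y^ℓ − β, z^k − γ⟩` of `F[x,y,z]`. -/
noncomputable def ccIdeal (F : Type*) [Field F] (s l k : ℕ) (α β γ : F) :
    Ideal (MvPolynomial (Fin 3) F) :=
  Ideal.span { MvPolynomial.X 0 ^ s - MvPolynomial.C α,
               MvPolynomial.X 1 ^ l - MvPolynomial.C β,
               MvPolynomial.X 2 ^ k - MvPolynomial.C γ }

/-- A univariate polynomial viewed in `F[x,y,z]` as a polynomial in `x`. -/
noncomputable def inX {F : Type*} [Field F] (p : Polynomial F) : MvPolynomial (Fin 3) F :=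
  Polynomial.aeval (MvPolynomial.X 0) p

/-- A univariate polynomial viewed in `F[x,y,z]` as a polynomial in `y`. -/
noncomputable def inY {F : Type*} [Field F] (p : Polynomial F) : MvPolynomial (Fin 3) F :=
  Polynomial.aeval (MvPolynomial.X 1) p

/-- A univariate polynomial viewed in `F[x,y,z]` as a polynomial in `z`. -/
noncomputable def inZ {F : Type*} [Field F] (p : Polynomial F) : MvPolynomial (Fin 3) F :=
  Polynomial.aeval (MvPolynomial.X 2) p

/-- The interpolation node `ω^{1+tr}`. -/
def node {F : Type*} [Field F] (ω : F) (r t : ℕ) : F := ω ^ (1 + t * r)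

/-! ### Interpolation at the roots of `z^k − γ` -/

section Univariate

variable {F : Type*} [Field F] {ω γ : F} {r k : ℕ}

theorem zetaPoly_eq_basis (t : ℕ) :
    zetaPoly ω r k t = Lagrange.basis (Finset.range k) (node ω r) t := rfl

theorem node_pow (hr : orderOf γ = r) (hωk : ω ^ k = γ) (t : ℕ) : node ω r t ^ k = γ := by
  rw [node, ← pow_mul, mul_comm, pow_mul, hωk, pow_add, pow_one, mul_comm t r, pow_mul, ← hr,
    pow_orderOf_eq_one, one_pow, mul_one]

theorem node_injOn [Finite F] (hγ : γ ≠ 0) (hk : 1 ≤ k) (hr : orderOf γ = r)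
    (hω : orderOf ω = r * k) (hωk : ω ^ k = γ) :
    Set.InjOn (node ω r) (Finset.range k : Set ℕ) := by
  have hω0 : ω ≠ 0 := by
    rintro rfl
    exact hγ (by rw [← hωk, zero_pow (by omega)])
  have hr0 : 0 < r := by
    rw [← hr, ← Units.val_mk0 hγ, orderOf_units]
    exact orderOf_pos _
  intro t ht t' ht' h
  simp only [Finset.coe_range, Set.mem_Iio] at ht ht'
  have h' : ω ^ (t * r) = ω ^ (t' * r) := by
    simpa [node, pow_add, hω0] using h
  have key : ∀ u, u < k → u * r ∈ Set.Iio (orderOf ω) := by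
    intro u hu
    rw [Set.mem_Iio, hω, mul_comm u r]
    exact Nat.mul_lt_mul_of_pos_left hu hr0
  exact Nat.eq_of_mul_eq_mul_right hr0 (pow_injOn_Iio_orderOf (key t ht) (key t' ht') h')

theorem prod_node (hk : 1 ≤ k) (hinj : Set.InjOn (node ω r) (Finset.range k : Set ℕ))
    (hpow : ∀ t, node ω r t ^ k = γ) :
    ∏ t ∈ Finset.range k, (X - C (node ω r t)) = (X ^ k - C γ : F[X]) := by
  have hdeg : (∏ t ∈ Finset.range k, (X - C (node ω r t))).natDegree = k := by
    simp
  refine (Polynomial.eq_of_monic_of_dvd_of_natDegree_le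
    (monic_prod_of_monic _ _ fun t _ => monic_X_sub_C _)
    (monic_X_pow_sub_C γ (by omega)) ?_ ?_).symm
  · refine Finset.prod_dvd_of_coprime ?_ ?_
    · intro i hi j hj hij
      exact isCoprime_X_sub_C_of_isUnit_sub
        (sub_ne_zero.2 fun h => hij (hinj hi hj h)).isUnit
    · intro t _
      rw [dvd_iff_isRoot]
      simp [hpow]
  · rw [hdeg, natDegree_X_pow_sub_C]

/-- Modulo `z^k − γ`, multiplication by `z` acts on `ζ_t` as the scalar `ω^{1+tr}`. -/
theorem dvd_sub_mul_zeta (hk : 1 ≤ k) (hinj : Set.InjOn (node ω r) (Finset.range k : Set ℕ))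
    (hpow : ∀ t, node ω r t ^ k = γ) (t : Fin k) :
    (X ^ k - C γ : F[X]) ∣ (X - C (node ω r t)) * zetaPoly ω r k t := by
  rw [← prod_node hk hinj hpow,
    ← Finset.mul_prod_erase _ _ (Finset.mem_range.2 t.2), zetaPoly, Finset.prod_mul_distrib]
  exact mul_dvd_mul_left _ (Dvd.intro_left _ rfl)

theorem sum_zeta (hk : 1 ≤ k) (hinj : Set.InjOn (node ω r) (Finset.range k : Set ℕ)) :
    ∑ t : Fin k, zetaPoly ω r k t = (1 : F[X]) := by
  rw [Fin.sum_univ_eq_sum_range (fun t => zetaPoly ω r k t)]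
  exact Lagrange.sum_basis hinj ⟨0, Finset.mem_range.2 hk⟩

theorem eval_zeta (hinj : Set.InjOn (node ω r) (Finset.range k : Set ℕ)) (t t' : Fin k) :
    (zetaPoly ω r k t).eval (node ω r t') = if t = t' then 1 else 0 := by
  rw [zetaPoly_eq_basis]
  split_ifs with h
  · subst h
    exact Lagrange.eval_basis_self hinj (Finset.mem_range.2 t.2)
  · exact Lagrange.eval_basis_of_ne (fun e => h (Fin.ext e)) (Finset.mem_range.2 t'.2)

end Univariate

/-! ### Decomposition of the quotient ring -/

section Code

variable {F : Type*} [Field F]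

/-- Evaluation `f ↦ f(x, b, c)`, from `F[x,y,z]` to `F[x]`. -/
noncomputable def evYZ (b c : F) : MvPolynomial (Fin 3) F →ₐ[F] F[X] :=
  MvPolynomial.aeval ![X, C b, C c]

theorem evYZ_inX (b c : F) (p : F[X]) : evYZ b c (inX p) = p := by
  simp [evYZ, inX, ← Polynomial.aeval_algHom_apply]

theorem evYZ_inY (b c : F) (p : F[X]) : evYZ b c (inY p) = C (p.eval b) := by
  rw [evYZ, inY, ← Polynomial.aeval_algHom_apply, MvPolynomial.aeval_X]
  exact Polynomial.aeval_algebraMap_apply F[X] b p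

theorem evYZ_inZ (b c : F) (p : F[X]) : evYZ b c (inZ p) = C (p.eval c) := by
  rw [evYZ, inZ, ← Polynomial.aeval_algHom_apply, MvPolynomial.aeval_X]
  exact Polynomial.aeval_algebraMap_apply F[X] c p

theorem inX_mem {s l k : ℕ} {α β γ : F} {p : F[X]} (h : X ^ s - C α ∣ p) :
    inX p ∈ ccIdeal F s l k α β γ := by
  obtain ⟨u, rfl⟩ := h
  rw [inX, map_mul]
  exact Ideal.mul_mem_right _ _ (Ideal.subset_span (by simp))

theorem inY_mem {s l k : ℕ} {α β γ : F} {p : F[X]} (h : X ^ l - C β ∣ p) :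
    inY p ∈ ccIdeal F s l k α β γ := by
  obtain ⟨u, rfl⟩ := h
  rw [inY, map_mul]
  exact Ideal.mul_mem_right _ _ (Ideal.subset_span (by simp))

theorem inZ_mem {s l k : ℕ} {α β γ : F} {p : F[X]} (h : X ^ k - C γ ∣ p) :
    inZ p ∈ ccIdeal F s l k α β γ := by
  obtain ⟨u, rfl⟩ := h
  rw [inZ, map_mul]
  exact Ideal.mul_mem_right _ _ (Ideal.subset_span (by simp))

/-- If `y` and `z` act on `e` as the scalars `b` and `c` modulo an ideal, then every `f` acts on `e`
as `f(x, b, c)`. -/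
theorem mul_idem {I : Ideal (MvPolynomial (Fin 3) F)} {e : MvPolynomial (Fin 3) F} {b c : F}
    (hy : (MvPolynomial.X 1 - MvPolynomial.C b) * e ∈ I)
    (hz : (MvPolynomial.X 2 - MvPolynomial.C c) * e ∈ I) (f : MvPolynomial (Fin 3) F) :
    (f - inX (evYZ b c f)) * e ∈ I := by
  induction f using MvPolynomial.induction_on with
  | C u => simp [inX, evYZ, MvPolynomial.algebraMap_eq]
  | add f g hf hg =>
    have := I.add_mem hf hg
    simp only [inX, map_add] at this ⊢
    convert this using 1
    ring
  | mul_X f i hf =>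
    have hi : (MvPolynomial.X i - inX (evYZ b c (MvPolynomial.X i))) * e ∈ I := by
      fin_cases i
      · simp [inX, evYZ]
      · simpa [inX, evYZ, MvPolynomial.algebraMap_eq] using hy
      · simpa [inX, evYZ, MvPolynomial.algebraMap_eq] using hz
    have := I.add_mem (I.mul_mem_left (MvPolynomial.X i) hf)
      (I.mul_mem_left (inX (evYZ b c f)) hi)
    simp only [inX, map_mul] at this ⊢
    convert this using 1
    ring

theorem evYZ_gen {l k r r' : ℕ} {ω θ : F}
    (hz : Set.InjOn (node ω r) (Finset.range k : Set ℕ))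
    (hy : Set.InjOn (node θ r') (Finset.range l : Set ℕ)) (g : F[X]) (ij tj : Fin k × Fin l) :
    evYZ (node θ r' tj.2) (node ω r tj.1)
      (inZ (zetaPoly ω r k ij.1) * inY (zetaPoly θ r' l ij.2) * inX g) =
      if ij = tj then g else 0 := by
  rw [map_mul, map_mul, evYZ_inX, evYZ_inY, evYZ_inZ, eval_zeta hz, eval_zeta hy]
  rcases ij with ⟨i, j⟩
  rcases tj with ⟨t, j'⟩
  by_cases h1 : i = t <;> by_cases h2 : j = j' <;> simp [h1, h2]

/-- Evaluation at all pairs of nodes identifies `R ⧸ C` with `∏_{t,j} F[x]/(p_j^{(t)})`. Since `R`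
is not yet known to be finite-dimensional, this is recorded as a surjection with kernel `C`. -/
theorem exists_surjective_ker_eq {s l k : ℕ} {α β γ : F} {r r' : ℕ} {ω θ : F}
    (hl : 1 ≤ l) (hk : 1 ≤ k)
    (hz : Set.InjOn (node ω r) (Finset.range k : Set ℕ)) (hzp : ∀ t, node ω r t ^ k = γ)
    (hy : Set.InjOn (node θ r') (Finset.range l : Set ℕ)) (hyp : ∀ t, node θ r' t ^ l = β)
    (p : Fin k → Fin l → F[X]) (hdvd : ∀ t j, p t j ∣ X ^ s - C α) :
    ∃ Φ : (MvPolynomial (Fin 3) F ⧸ ccIdeal F s l k α β γ) →ₐ[F]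
        ((tj : Fin k × Fin l) → AdjoinRoot (p tj.1 tj.2)),
      Function.Surjective Φ ∧ RingHom.ker Φ =
        Ideal.span (Set.range fun tj : Fin k × Fin l =>
          Ideal.Quotient.mk (ccIdeal F s l k α β γ)
            (inZ (zetaPoly ω r k tj.1) * inY (zetaPoly θ r' l tj.2) * inX (p tj.1 tj.2))) := by
  let Φ₀ : MvPolynomial (Fin 3) F →ₐ[F] ((tj : Fin k × Fin l) → AdjoinRoot (p tj.1 tj.2)) :=
    AlgHom.pi fun tj : Fin k × Fin l => (AdjoinRoot.mkₐ (p tj.1 tj.2)).comp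
      (evYZ (node θ r' tj.2) (node ω r tj.1))
  have hΦ₀ : ∀ f tj, Φ₀ f tj =
      AdjoinRoot.mk (p tj.1 tj.2) (evYZ (node θ r' tj.2) (node ω r tj.1) f) := fun f tj => rfl
  have hI : ∀ f ∈ ccIdeal F s l k α β γ, Φ₀ f = 0 := by
    intro f hf
    have hle : ccIdeal F s l k α β γ ≤ RingHom.ker Φ₀ := by
      refine Ideal.span_le.2 ?_
      rintro g (rfl | rfl | rfl) <;> rw [SetLike.mem_coe, RingHom.mem_ker] <;> funext tj <;>
        rw [hΦ₀, Pi.zero_apply, AdjoinRoot.mk_eq_zero]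
      · simpa [evYZ, Polynomial.algebraMap_eq] using hdvd tj.1 tj.2
      · simp [evYZ, Polynomial.algebraMap_eq, ← C_pow, hyp]
      · simp [evYZ, Polynomial.algebraMap_eq, ← C_pow, hzp]
    exact hle hf
  let Φ := Ideal.Quotient.liftₐ (ccIdeal F s l k α β γ) Φ₀ hI
  have hΦ : ∀ f, Φ (Ideal.Quotient.mk _ f) = Φ₀ f := fun f => rfl
  refine ⟨Φ, ?_, le_antisymm ?_ ?_⟩
  · intro v
    choose g hg using fun tj => AdjoinRoot.mk_surjective (v tj)
    refine ⟨Ideal.Quotient.mk _ (∑ ij : Fin k × Fin l,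
      inZ (zetaPoly ω r k ij.1) * inY (zetaPoly θ r' l ij.2) * inX (g ij)), ?_⟩
    funext tj
    rw [hΦ, hΦ₀, map_sum]
    simp only [evYZ_gen hz hy]
    rw [Finset.sum_ite_eq' Finset.univ tj, if_pos (Finset.mem_univ _), hg]
  · intro f hf
    obtain ⟨f, rfl⟩ := Ideal.Quotient.mk_surjective f
    rw [RingHom.mem_ker, hΦ] at hf
    have hone : ∑ tj : Fin k × Fin l,
        inZ (zetaPoly ω r k tj.1) * inY (zetaPoly θ r' l tj.2) =
          (1 : MvPolynomial (Fin 3) F) := by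
      rw [Fintype.sum_prod_type, ← Fintype.sum_mul_sum
        (fun t : Fin k => inZ (zetaPoly ω r k t)) (fun j : Fin l => inY (zetaPoly θ r' l j))]
      simp only [inZ, inY, ← map_sum]
      rw [sum_zeta hk hz, sum_zeta hl hy, map_one, map_one, one_mul]
    rw [← mul_one f, ← hone, Finset.mul_sum, map_sum]
    refine Ideal.sum_mem _ fun tj _ => ?_
    have hdv : p tj.1 tj.2 ∣ evYZ (node θ r' tj.2) (node ω r tj.1) f := by
      rw [← AdjoinRoot.mk_eq_zero, ← hΦ₀, hf, Pi.zero_apply]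
    obtain ⟨u, hu⟩ := hdv
    have hmem := mul_idem (I := ccIdeal F s l k α β γ)
      (e := inZ (zetaPoly ω r k tj.1) * inY (zetaPoly θ r' l tj.2))
      (b := node θ r' tj.2) (c := node ω r tj.1)
      (by
        have := Ideal.mul_mem_left _ (inZ (zetaPoly ω r k tj.1))
          (inY_mem (s := s) (k := k) (α := α) (γ := γ) (dvd_sub_mul_zeta hl hy hyp tj.2))
        convert this using 1
        simp only [inY, map_mul, map_sub, Polynomial.aeval_X, Polynomial.aeval_C,
          MvPolynomial.algebraMap_eq]
        ring)
      (by
        have := Ideal.mul_mem_left _ (inY (zetaPoly θ r' l tj.2))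
          (inZ_mem (s := s) (l := l) (α := α) (β := β) (dvd_sub_mul_zeta hk hz hzp tj.1))
        convert this using 1
        simp only [inZ, map_mul, map_sub, Polynomial.aeval_X, Polynomial.aeval_C,
          MvPolynomial.algebraMap_eq]
        ring) f
    rw [sub_mul, ← Ideal.Quotient.mk_eq_mk_iff_sub_mem] at hmem
    rw [hmem, hu]
    have : inX (p tj.1 tj.2 * u) * (inZ (zetaPoly ω r k tj.1) * inY (zetaPoly θ r' l tj.2)) =
        inX u * (inZ (zetaPoly ω r k tj.1) * inY (zetaPoly θ r' l tj.2) *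
          inX (p tj.1 tj.2)) := by
      simp only [inX, map_mul]
      ring
    rw [this, map_mul]
    exact Ideal.mul_mem_left _ _ (Ideal.subset_span ⟨tj, rfl⟩)
  · refine Ideal.span_le.2 ?_
    rintro _ ⟨ij, rfl⟩
    rw [SetLike.mem_coe, RingHom.mem_ker, hΦ]
    funext tj
    rw [hΦ₀, evYZ_gen hz hy]
    split_ifs with h
    · subst h
      exact AdjoinRoot.mk_self
    · exact map_zero _

theorem finrank_pi_adjoinRoot {l k : ℕ} (p : Fin k → Fin l → F[X])
    (hmonic : ∀ t j, (p t j).Monic) :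
    Module.finrank F ((tj : Fin k × Fin l) → AdjoinRoot (p tj.1 tj.2)) =
      ∑ t : Fin k, ∑ j : Fin l, (p t j).natDegree := by
  have : ∀ tj : Fin k × Fin l, Module.Finite F (AdjoinRoot (p tj.1 tj.2)) :=
    fun tj => (hmonic tj.1 tj.2).finite_adjoinRoot
  have : ∀ tj : Fin k × Fin l, Module.Free F (AdjoinRoot (p tj.1 tj.2)) :=
    fun tj => (hmonic tj.1 tj.2).free_adjoinRoot
  rw [Module.finrank_pi_fintype, Fintype.sum_prod_type]
  refine Finset.sum_congr rfl fun t _ => Finset.sum_congr rfl fun j _ => ?_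
  rw [(AdjoinRoot.powerBasis' (hmonic t j)).finrank, AdjoinRoot.powerBasis'_dim]

theorem finrank_code_add {s l k : ℕ} {α β γ : F} {r r' : ℕ} {ω θ : F}
    (hs : 1 ≤ s) (hl : 1 ≤ l) (hk : 1 ≤ k)
    (hz : Set.InjOn (node ω r) (Finset.range k : Set ℕ)) (hzp : ∀ t, node ω r t ^ k = γ)
    (hy : Set.InjOn (node θ r') (Finset.range l : Set ℕ)) (hyp : ∀ t, node θ r' t ^ l = β)
    (p : Fin k → Fin l → F[X]) (hmonic : ∀ t j, (p t j).Monic)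
    (hdvd : ∀ t j, p t j ∣ X ^ s - C α) :
    (∑ t : Fin k, ∑ j : Fin l, (p t j).natDegree) +
      Module.finrank F (Submodule.restrictScalars F (Ideal.span
        (Set.range fun tj : Fin k × Fin l =>
          Ideal.Quotient.mk (ccIdeal F s l k α β γ)
            (inZ (zetaPoly ω r k tj.1) * inY (zetaPoly θ r' l tj.2) * inX (p tj.1 tj.2))))) =
      s * l * k := by
  have hq : (X ^ s - C α : F[X]).Monic := monic_X_pow_sub_C α (by omega)
  -- With all `p t j` equal to `x^s − α` the code is zero, so this case computes `dim R`.
  obtain ⟨Ψ, hΨs, hΨk⟩ := exists_surjective_ker_eq (s := s) (α := α) hl hk hz hzp hy hyp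
    (fun _ _ => X ^ s - C α) (fun _ _ => dvd_rfl)
  have hΨi : Function.Injective Ψ := by
    rw [RingHom.injective_iff_ker_eq_bot Ψ, hΨk, Ideal.span_eq_bot]
    rintro _ ⟨tj, rfl⟩
    exact Ideal.Quotient.eq_zero_iff_mem.2 (Ideal.mul_mem_left _ _ (inX_mem dvd_rfl))
  let E := LinearEquiv.ofBijective Ψ.toLinearMap ⟨hΨi, hΨs⟩
  have : ∀ tj : Fin k × Fin l, Module.Finite F (AdjoinRoot (X ^ s - C α : F[X])) :=
    fun tj => hq.finite_adjoinRoot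
  have hfin : Module.Finite F (MvPolynomial (Fin 3) F ⧸ ccIdeal F s l k α β γ) :=
    Module.Finite.equiv E.symm
  have hR := E.finrank_eq
  rw [finrank_pi_adjoinRoot (fun _ _ => X ^ s - C α) (fun _ _ => hq)] at hR
  simp only [natDegree_X_pow_sub_C, Finset.sum_const, Finset.card_univ, Fintype.card_fin,
    smul_eq_mul] at hR
  obtain ⟨Φ, hΦs, hΦk⟩ := exists_surjective_ker_eq (s := s) (α := α) hl hk hz hzp hy hyp p hdvd
  have h := Φ.toLinearMap.finrank_range_add_finrank_ker
  rw [LinearMap.range_eq_top.2 hΦs, finrank_top, finrank_pi_adjoinRoot p hmonic, hR] at h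
  rw [← hΦk]
  refine Eq.trans h ?_
  ring

end Code

/-- **Corollary to Theorem 2**: the dimension of the 3-D `(α,β,γ)`-constacyclic code
`C = ⟨ζ_t(z)·η_j(y)·p_j^{(t)}(x)⟩` of length `sℓk` is `sℓk − Σ_t Σ_j a_{t,j}`. -/
theorem stmt10 {F : Type*} [Field F] [Fintype F] (s l k : ℕ)
    (hs : 1 ≤ s) (hl : 1 ≤ l) (hk : 1 ≤ k)
    (α β γ : F) (hα : α ≠ 0) (hβ : β ≠ 0) (hγ : γ ≠ 0)
    (r r' : ℕ) (hr : orderOf γ = r) (hr' : orderOf β = r')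
    (ω : F) (hω : orderOf ω = r * k) (hωk : ω ^ k = γ)
    (θ : F) (hθ : orderOf θ = r' * l) (hθl : θ ^ l = β)
    (p : Fin k → Fin l → Polynomial F) (a : Fin k → Fin l → ℕ)
    (hmonic : ∀ t j, (p t j).Monic)
    (hdvd : ∀ t j, p t j ∣ Polynomial.X ^ s - Polynomial.C α)
    (hdeg : ∀ t j, (p t j).natDegree = a t j)
    (C : Ideal (MvPolynomial (Fin 3) F ⧸ ccIdeal F s l k α β γ))
    (hC : C = Ideal.span (Set.range fun tj : Fin k × Fin l =>
      Ideal.Quotient.mk (ccIdeal F s l k α β γ)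
        (inZ (zetaPoly ω r k tj.1) * inY (zetaPoly θ r' l tj.2) * inX (p tj.1 tj.2)))) :
    Module.finrank F (Submodule.restrictScalars F C) =
      s * l * k - ∑ t : Fin k, ∑ j : Fin l, a t j := by

  have hz := node_injOn hγ hk hr hω hωk
  have hy := node_injOn hβ hl hr' hθ hθl
  have h := finrank_code_add (s := s) (α := α) hs hl hk hz (node_pow hr hωk) hy
    (node_pow hr' hθl) p hmonic hdvd
  simp only [hdeg] at h
  rw [hC]
  omega
end

section
/- Let F be a field, let s,ℓ,k ≥ 1, and let α,β,γ ∈ {1,−1} ⊆ F. Let R := F[x,y,z]/⟨x^s−α, y^ℓ−β, z^k−γ⟩ with quotient map π, let V := (Fin s × Fin ℓ × Fin k) → F with the dot product ⟨c,d⟩ := Σ_{i,j,t} c(i,j,t)·d(i,j,t), and let φ : V → R be the F-linear isomorphism φ(c) := Σ_{i,j,t} c(i,j,t)·π(x^i y^j z^t). Let σ : R → R be the F-algebra homomorphism determined by σ(π(x)) = α·π(x)^{s−1}, σ(π(y)) = β·π(y)^{ℓ−1}, σ(π(z)) = γ·π(z)^{k−1} (these images satisfy the defining relations, so σ exists and is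 an automorphism sending each generator to its inverse). Then for every ideal C of R, the orthogonal complement {v ∈ V : ⟨v, φ^{−1}(c)⟩ = 0 for all c ∈ C} equals φ^{−1} of the image under σ of the annihilator ideal ann(C) := {f ∈ R : f·g = 0 for all g ∈ C}. -/
/-!
Write `R = F[x,y,z]/⟨x^s − α, y^ℓ − β, z^k − γ⟩`. Reading off the constant coefficient in the
monomial basis defines an `F`-linear functional `τ : R → F` (`ccTrace`). Since
`α² = β² = γ² = 1`, the map `σ` inverts each generator, so it is an involution, and on basis
monomials `τ (m · σ m')` is `1` if `m = m'` and `0` otherwise. By bilinearity the dot product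
becomes a trace form: `⟨v, b⟩ = τ (φ v · σ (φ b))` (`dotV_eq_ccTrace`).

If `φ v = σ f` with `f` annihilating `C`, then `⟨v, b⟩ = τ (σ (f · φ b)) = 0` whenever
`φ b ∈ C`. Conversely, if `v` is orthogonal to `C`, put `f = σ (φ v)`, so that `σ f = φ v`. For
`g ∈ C` all multiples `h g` are in `C`, and `φ` is surjective (`phiV_surjective`), hence
`τ (σ (f g) · σ h) = 0` for every `h`. Writing `σ (f g) = φ c` and taking for `h` the basis
monomials shows that every coordinate of `c` vanishes, so `σ (f g) = 0` and `f g = 0`.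

The functional `τ` is built on `F[x,y,z]` by prescribing its values on all monomials as a
product of one-variable weights and is then shown to kill the defining ideal; injectivity of `φ`
is not needed.
-/

set_option synthInstance.maxHeartbeats 1000000

open Polynomial

/-- The `λ`-twisted shift in the `x`-direction on `V = (Fin s × Fin ℓ × Fin k) → F`:
`(T_λ^x c)(i,j,t) = λ·c(s−1,j,t)` if `i = 0`, and `c(i−1,j,t)` otherwise. -/
def shiftX {F : Type*} [Field F] {s l k : ℕ} [NeZero s] (lam : F)
    (c : Fin s × Fin l × Fin k → F) : Fin s × Fin l × Fin k → F :=
  fun w => (if w.1 = 0 then lam else 1) * c (w.1 - 1, w.2.1, w.2.2)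

/-- The `λ`-twisted shift in the `y`-direction. -/
def shiftY {F : Type*} [Field F] {s l k : ℕ} [NeZero l] (lam : F)
    (c : Fin s × Fin l × Fin k → F) : Fin s × Fin l × Fin k → F :=
  fun w => (if w.2.1 = 0 then lam else 1) * c (w.1, w.2.1 - 1, w.2.2)

/-- The `λ`-twisted shift in the `z`-direction. -/
def shiftZ {F : Type*} [Field F] {s l k : ℕ} [NeZero k] (lam : F)
    (c : Fin s × Fin l × Fin k → F) : Fin s × Fin l × Fin k → F :=
  fun w => (if w.2.2 = 0 then lam else 1) * c (w.1, w.2.1, w.2.2 - 1)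

/-- The dot product on `V = (Fin s × Fin ℓ × Fin k) → F`. -/
def dotV {F : Type*} [Field F] {s l k : ℕ}
    (c d : Fin s × Fin l × Fin k → F) : F :=
  ∑ w : Fin s × Fin l × Fin k, c w * d w

/-- Reversal of coordinates: `(ρ b)(i,j,t) = b(s−1−i, ℓ−1−j, k−1−t)`. -/
def revV {F : Type*} [Field F] {s l k : ℕ}
    (b : Fin s × Fin l × Fin k → F) : Fin s × Fin l × Fin k → F :=
  fun w => b (w.1.rev, w.2.1.rev, w.2.2.rev)

/-- The `F`-linear isomorphism `V → R` sending a coefficient vector `c` to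
`Σ c(i,j,t)·π(x^i y^j z^t)` in `R = F[x,y,z]/⟨x^s−α, y^ℓ−β, z^k−γ⟩`. -/
noncomputable def phiV {F : Type*} [Field F] {s l k : ℕ} (α β γ : F)
    (c : Fin s × Fin l × Fin k → F) :
    MvPolynomial (Fin 3) F ⧸ ccIdeal F s l k α β γ :=
  ∑ w : Fin s × Fin l × Fin k,
    c w • Ideal.Quotient.mk (ccIdeal F s l k α β γ)
      (MvPolynomial.X 0 ^ (w.1 : ℕ) * MvPolynomial.X 1 ^ (w.2.1 : ℕ) *
        MvPolynomial.X 2 ^ (w.2.2 : ℕ))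

/-- The constant coefficient of `x^a` modulo `x^n − lam`: it is `lam^(a/n)` if `n ∣ a`, and `0`
otherwise. -/
def ccWeight {F : Type*} [Field F] (n : ℕ) (lam : F) (a : ℕ) : F :=
  if n ∣ a then lam ^ (a / n) else 0

lemma ccWeight_add {F : Type*} [Field F] (n : ℕ) [NeZero n] (lam : F) (a : ℕ) :
    ccWeight n lam (a + n) = lam * ccWeight n lam a := by
  have hn : 0 < n := NeZero.pos n
  unfold ccWeight
  rw [Nat.add_div_right _ hn, pow_succ']
  simp

/-- Orthonormality in one variable: the constant coefficient of `x^i · (lam·x^(n-1))^j`,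
that is, of `x^(i-j)`, is `1` if `i = j` and `0` otherwise. -/
lemma ccWeight_ortho {F : Type*} [Field F] (n : ℕ) [NeZero n] (lam : F) (hl : lam * lam = 1)
    (i j : Fin n) :
    lam ^ (j : ℕ) * ccWeight n lam (i + (n - 1) * j) = if i = j then 1 else 0 := by
  have hn : 0 < n := NeZero.pos n
  have hmod : (i : ℕ) + (n - 1) * j + j = i + n * j := by
    obtain ⟨m, rfl⟩ : ∃ m, n = m + 1 := ⟨n - 1, by omega⟩
    simp only [Nat.add_sub_cancel]
    ring
  unfold ccWeight
  by_cases h : i = j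
  · subst h
    have h2 : (i : ℕ) + (n - 1) * i = n * i := by omega
    rw [h2, if_pos (dvd_mul_right _ _), Nat.mul_div_cancel_left _ hn, ← mul_pow, hl]
    simp
  · have hnd : ¬ n ∣ (i : ℕ) + (n - 1) * j := by
      rintro ⟨q, hq⟩
      apply h
      have h3 := congrArg (· % n) hmod
      simp only [hq, Nat.mul_add_mod, Nat.add_mul_mod_self_left, Nat.mod_eq_of_lt i.2,
        Nat.mod_eq_of_lt j.2] at h3
      exact Fin.ext h3.symm
    rw [if_neg hnd, if_neg h, mul_zero]

/-- The class of the monomial `x^a y^b z^c` in `R`. -/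
noncomputable def ccMon {F : Type*} [Field F] (s l k : ℕ) (α β γ : F) (a b c : ℕ) :
    MvPolynomial (Fin 3) F ⧸ ccIdeal F s l k α β γ :=
  Ideal.Quotient.mk (ccIdeal F s l k α β γ)
    (MvPolynomial.X 0 ^ a * MvPolynomial.X 1 ^ b * MvPolynomial.X 2 ^ c)

/-- The constant coefficient modulo the relations, as a functional on `F[x,y,z]`. -/
noncomputable def ccTracePoly {F : Type*} [Field F] (s l k : ℕ) (α β γ : F) :
    MvPolynomial (Fin 3) F →ₗ[F] F :=
  (MvPolynomial.basisMonomials (Fin 3) F).constr F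
    (fun d => ccWeight s α (d 0) * ccWeight l β (d 1) * ccWeight k γ (d 2))

lemma ccTracePoly_monomial {F : Type*} [Field F] (s l k : ℕ) (α β γ : F) (d : Fin 3 →₀ ℕ)
    (r : F) :
    ccTracePoly s l k α β γ (MvPolynomial.monomial d r) =
      r * (ccWeight s α (d 0) * ccWeight l β (d 1) * ccWeight k γ (d 2)) := by
  have h := (MvPolynomial.basisMonomials (Fin 3) F).constr_basis F
    (fun d => ccWeight s α (d 0) * ccWeight l β (d 1) * ccWeight k γ (d 2)) d
  rw [MvPolynomial.coe_basisMonomials] at h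
  have h1 : MvPolynomial.monomial d r = r • MvPolynomial.monomial d (1 : F) := by
    rw [MvPolynomial.smul_monomial, smul_eq_mul, mul_one]
  rw [h1, map_smul, smul_eq_mul]
  exact congrArg (r * ·) h

/-- If shifting the exponent of the variable `v` by `n` scales the functional by `lam`, then the
functional kills every multiple of `X_v^n − lam`. -/
lemma ccTracePoly_mul_gen {F : Type*} [Field F] (s l k : ℕ) (α β γ : F) (v : Fin 3) (n : ℕ)
    (lam : F)
    (hw : ∀ d : Fin 3 →₀ ℕ, ccTracePoly s l k α β γ
        (MvPolynomial.monomial (d + Finsupp.single v n) 1) =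
      lam * ccTracePoly s l k α β γ (MvPolynomial.monomial d 1))
    (p : MvPolynomial (Fin 3) F) :
    ccTracePoly s l k α β γ (p * (MvPolynomial.X v ^ n - MvPolynomial.C lam)) = 0 := by
  induction p using MvPolynomial.induction_on' with
  | monomial d r =>
    have e1 : MvPolynomial.monomial d r * (MvPolynomial.X v ^ n - MvPolynomial.C lam) =
        r • MvPolynomial.monomial (d + Finsupp.single v n) (1 : F) -
          (r * lam) • MvPolynomial.monomial d (1 : F) := by
      rw [mul_sub, MvPolynomial.X_pow_eq_monomial, MvPolynomial.monomial_mul,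
        mul_comm _ (MvPolynomial.C lam), MvPolynomial.C_mul_monomial,
        MvPolynomial.smul_monomial, MvPolynomial.smul_monomial]
      simp [mul_comm]
    rw [e1, map_sub, map_smul, map_smul, hw]
    simp only [smul_eq_mul]
    ring
  | add p q hp hq => rw [add_mul, map_add, hp, hq, add_zero]

/-- The functional vanishes on the defining ideal. Allowing a multiplier `q` makes the statement
stable under the span induction. -/
lemma ccTracePoly_mul_mem {F : Type*} [Field F] (s l k : ℕ) [NeZero s] [NeZero l] [NeZero k]
    (α β γ : F) (p : MvPolynomial (Fin 3) F) (hp : p ∈ ccIdeal F s l k α β γ) :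
    ∀ q, ccTracePoly s l k α β γ (q * p) = 0 := by
  unfold ccIdeal at hp
  induction hp using Submodule.span_induction with
  | mem x hx =>
    intro q
    rcases hx with rfl | rfl | rfl <;>
    · apply ccTracePoly_mul_gen
      intro d
      simp [ccTracePoly_monomial, ccWeight_add]
      try ring
  | zero => simp
  | add x y _ _ hx hy => intro q; rw [mul_add, map_add, hx, hy, add_zero]
  | smul a x _ hx => intro q; rw [smul_eq_mul, ← mul_assoc, hx]

/-- The functional `τ : R → F` reading off the constant coefficient in the monomial basis. -/
noncomputable def ccTrace {F : Type*} [Field F] (s l k : ℕ) [NeZero s] [NeZero l] [NeZero k]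
    (α β γ : F) : (MvPolynomial (Fin 3) F ⧸ ccIdeal F s l k α β γ) →ₗ[F] F :=
  (((ccIdeal F s l k α β γ).restrictScalars F).liftQ (ccTracePoly s l k α β γ)
    (fun p hp => by
      have h := ccTracePoly_mul_mem s l k α β γ p hp 1
      rw [one_mul] at h
      exact h)).comp
    (Submodule.Quotient.restrictScalarsEquiv F (ccIdeal F s l k α β γ)).symm.toLinearMap

lemma ccTrace_mk {F : Type*} [Field F] (s l k : ℕ) [NeZero s] [NeZero l] [NeZero k]
    (α β γ : F) (p : MvPolynomial (Fin 3) F) :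
    ccTrace s l k α β γ (Ideal.Quotient.mk (ccIdeal F s l k α β γ) p) =
      ccTracePoly s l k α β γ p := rfl

lemma X_pow_eq_monomial_three {F : Type*} [Field F] (a b c : ℕ) :
    (MvPolynomial.X 0 ^ a * MvPolynomial.X 1 ^ b * MvPolynomial.X 2 ^ c :
      MvPolynomial (Fin 3) F) =
    MvPolynomial.monomial
      (Finsupp.single 0 a + Finsupp.single 1 b + Finsupp.single 2 c) 1 := by
  simp [MvPolynomial.X_pow_eq_monomial, MvPolynomial.monomial_mul]

lemma ccTrace_ccMon {F : Type*} [Field F] (s l k : ℕ) [NeZero s] [NeZero l] [NeZero k]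
    (α β γ : F) (a b c : ℕ) :
    ccTrace s l k α β γ (ccMon s l k α β γ a b c) =
      ccWeight s α a * ccWeight l β b * ccWeight k γ c := by
  unfold ccMon
  rw [ccTrace_mk, X_pow_eq_monomial_three, ccTracePoly_monomial]
  simp

lemma ccMon_mul {F : Type*} [Field F] (s l k : ℕ) (α β γ : F) (a b c a' b' c' : ℕ) :
    ccMon s l k α β γ a b c * ccMon s l k α β γ a' b' c' =
      ccMon s l k α β γ (a + a') (b + b') (c + c') := by
  unfold ccMon
  rw [← map_mul]
  congr 1
  ring

lemma mk_pow_eq {F : Type*} [Field F] (s l k : ℕ) (α β γ : F) :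
    Ideal.Quotient.mk (ccIdeal F s l k α β γ) (MvPolynomial.X 0) ^ s =
        Ideal.Quotient.mk (ccIdeal F s l k α β γ) (MvPolynomial.C α) ∧
    Ideal.Quotient.mk (ccIdeal F s l k α β γ) (MvPolynomial.X 1) ^ l =
        Ideal.Quotient.mk (ccIdeal F s l k α β γ) (MvPolynomial.C β) ∧
    Ideal.Quotient.mk (ccIdeal F s l k α β γ) (MvPolynomial.X 2) ^ k =
        Ideal.Quotient.mk (ccIdeal F s l k α β γ) (MvPolynomial.C γ) := by
  refine ⟨?_, ?_, ?_⟩ <;>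
  · rw [← map_pow, Ideal.Quotient.eq]
    exact Ideal.subset_span (by simp)

lemma mk_C_mul {F : Type*} [Field F] (I : Ideal (MvPolynomial (Fin 3) F)) (r : F)
    (p : MvPolynomial (Fin 3) F) :
    Ideal.Quotient.mk I (MvPolynomial.C r) * Ideal.Quotient.mk I p =
      r • Ideal.Quotient.mk I p := by
  rw [← map_mul, MvPolynomial.C_mul']
  rfl

/-- Up to a scalar, exponents can be reduced modulo `s`, `ℓ`, `k`. -/
lemma ccMon_reduce {F : Type*} [Field F] (s l k : ℕ) (α β γ : F) (a b c : ℕ) :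
    ccMon s l k α β γ a b c = (α ^ (a / s) * β ^ (b / l) * γ ^ (c / k)) •
      ccMon s l k α β γ (a % s) (b % l) (c % k) := by
  obtain ⟨hx, hy, hz⟩ := mk_pow_eq s l k α β γ
  unfold ccMon
  rw [← mk_C_mul]
  simp only [map_mul, map_pow, ← hx, ← hy, ← hz]
  conv_lhs => rw [← Nat.mod_add_div a s, ← Nat.mod_add_div b l, ← Nat.mod_add_div c k]
  simp only [pow_add, pow_mul]
  ring

lemma phiV_eq {F : Type*} [Field F] {s l k : ℕ} (α β γ : F) (c : Fin s × Fin l × Fin k → F) :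
    phiV α β γ c = Fintype.linearCombination F
      (fun w : Fin s × Fin l × Fin k => ccMon s l k α β γ w.1 w.2.1 w.2.2) c := rfl

lemma phiV_surjective {F : Type*} [Field F] {s l k : ℕ} [NeZero s] [NeZero l] [NeZero k]
    (α β γ : F) (r : MvPolynomial (Fin 3) F ⧸ ccIdeal F s l k α β γ) :
    ∃ c : Fin s × Fin l × Fin k → F, phiV α β γ c = r := by
  obtain ⟨p, rfl⟩ := Ideal.Quotient.mk_surjective r
  simp only [phiV_eq]
  change _ ∈ LinearMap.range (Fintype.linearCombination F
      (fun w : Fin s × Fin l × Fin k => ccMon s l k α β γ w.1 w.2.1 w.2.2))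
  induction p using MvPolynomial.induction_on' with
  | monomial d r =>
    have e : Ideal.Quotient.mk (ccIdeal F s l k α β γ) (MvPolynomial.monomial d r) =
        r • ccMon s l k α β γ (d 0) (d 1) (d 2) := by
      unfold ccMon
      rw [← mk_C_mul, ← map_mul, MvPolynomial.monomial_eq,
        Finsupp.prod_fintype _ _ (fun i => pow_zero _), Fin.prod_univ_three]
    rw [e, ccMon_reduce, Fintype.range_linearCombination]
    refine Submodule.smul_mem _ _ (Submodule.smul_mem _ _ (Submodule.subset_span ?_))
    exact ⟨(⟨d 0 % s, Nat.mod_lt _ (NeZero.pos s)⟩, ⟨d 1 % l, Nat.mod_lt _ (NeZero.pos l)⟩,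
      ⟨d 2 % k, Nat.mod_lt _ (NeZero.pos k)⟩), rfl⟩
  | add p q hp hq => rw [map_add]; exact Submodule.add_mem _ hp hq

lemma map_ccMon {F : Type*} [Field F] (s l k : ℕ) (α β γ : F)
    (σ : (MvPolynomial (Fin 3) F ⧸ ccIdeal F s l k α β γ) →ₐ[F]
         (MvPolynomial (Fin 3) F ⧸ ccIdeal F s l k α β γ))
    (hσx : σ (Ideal.Quotient.mk (ccIdeal F s l k α β γ) (MvPolynomial.X 0)) =
      Ideal.Quotient.mk (ccIdeal F s l k α β γ)
        (MvPolynomial.C α * MvPolynomial.X 0 ^ (s - 1)))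
    (hσy : σ (Ideal.Quotient.mk (ccIdeal F s l k α β γ) (MvPolynomial.X 1)) =
      Ideal.Quotient.mk (ccIdeal F s l k α β γ)
        (MvPolynomial.C β * MvPolynomial.X 1 ^ (l - 1)))
    (hσz : σ (Ideal.Quotient.mk (ccIdeal F s l k α β γ) (MvPolynomial.X 2)) =
      Ideal.Quotient.mk (ccIdeal F s l k α β γ)
        (MvPolynomial.C γ * MvPolynomial.X 2 ^ (k - 1)))
    (a b c : ℕ) :
    σ (ccMon s l k α β γ a b c) = (α ^ a * β ^ b * γ ^ c) •
      ccMon s l k α β γ ((s - 1) * a) ((l - 1) * b) ((k - 1) * c) := by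
  unfold ccMon
  rw [← mk_C_mul]
  simp only [map_mul, map_pow] at hσx hσy hσz ⊢
  rw [hσx, hσy, hσz]
  simp only [mul_pow, pow_mul]
  ring

/-- The dot product is the trace form twisted by `σ`. -/
lemma dotV_eq_ccTrace {F : Type*} [Field F] (s l k : ℕ) [NeZero s] [NeZero l] [NeZero k]
    (α β γ : F) (hα : α * α = 1) (hβ : β * β = 1) (hγ : γ * γ = 1)
    (σ : (MvPolynomial (Fin 3) F ⧸ ccIdeal F s l k α β γ) →ₐ[F]
         (MvPolynomial (Fin 3) F ⧸ ccIdeal F s l k α β γ))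
    (hσ : ∀ a b c : ℕ, σ (ccMon s l k α β γ a b c) = (α ^ a * β ^ b * γ ^ c) •
      ccMon s l k α β γ ((s - 1) * a) ((l - 1) * b) ((k - 1) * c))
    (v b : Fin s × Fin l × Fin k → F) :
    dotV v b = ccTrace s l k α β γ (phiV α β γ v * σ (phiV α β γ b)) := by
  have key : ∀ w w' : Fin s × Fin l × Fin k,
      ccTrace s l k α β γ (ccMon s l k α β γ w.1 w.2.1 w.2.2 *
        σ (ccMon s l k α β γ w'.1 w'.2.1 w'.2.2)) = if w = w' then 1 else 0 := by
    rintro ⟨i, j, t⟩ ⟨i', j', t'⟩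
    rw [hσ, mul_smul_comm, ccMon_mul, map_smul, ccTrace_ccMon, smul_eq_mul]
    have h1 := ccWeight_ortho s α hα i i'
    have h2 := ccWeight_ortho l β hβ j j'
    have h3 := ccWeight_ortho k γ hγ t t'
    have h4 : (if (i, j, t) = (i', j', t') then (1 : F) else 0) =
        (if i = i' then 1 else 0) * (if j = j' then 1 else 0) * (if t = t' then 1 else 0) := by
      simp only [Prod.mk.injEq]
      split_ifs <;> simp_all
    rw [h4, ← h1, ← h2, ← h3]
    ring
  simp only [phiV_eq, Fintype.linearCombination_apply, map_sum, map_smul, Finset.sum_mul_sum,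
    smul_mul_smul_comm, key, dotV]
  simp

/-- If `x^n = lam` and `lam² = 1`, an endomorphism sending `x` to `lam·x^(n-1)`, the inverse of
`x`, sends this inverse back to `x`. -/
lemma map_map_gen {F R : Type*} [Field F] [CommRing R] [Algebra F R] (σ : R →ₐ[F] R) (x : R)
    (n : ℕ) [NeZero n] (lam : F) (hl : lam * lam = 1) (hx : x ^ n = algebraMap F R lam)
    (hσ : σ x = algebraMap F R lam * x ^ (n - 1)) : σ (σ x) = x := by
  have h1 : x * σ x = 1 := by
    rw [hσ, mul_left_comm, ← pow_succ', Nat.sub_add_cancel (NeZero.pos n), hx, ← map_mul, hl,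
      map_one]
  have h2 : σ x * σ (σ x) = 1 := by rw [← map_mul, h1, map_one]
  calc σ (σ x) = (x * σ x) * σ (σ x) := by rw [h1, one_mul]
    _ = x := by rw [mul_assoc, h2, mul_one]

/-- **Proposition 4**: for `α, β, γ ∈ {1,−1}`, the dual code of an ideal `C` of
`R = F[x,y,z]/⟨x^s−α, y^ℓ−β, z^k−γ⟩` is `(ann C)^*`, the image of the annihilator of `C`
under the algebra automorphism `σ` sending each of `π(x), π(y), π(z)` to its inverse. -/
theorem stmt15 {F : Type*} [Field F] (s l k : ℕ) [NeZero s] [NeZero l] [NeZero k]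
    (α β γ : F) (hα : α = 1 ∨ α = -1) (hβ : β = 1 ∨ β = -1) (hγ : γ = 1 ∨ γ = -1)
    (σ : (MvPolynomial (Fin 3) F ⧸ ccIdeal F s l k α β γ) →ₐ[F]
         (MvPolynomial (Fin 3) F ⧸ ccIdeal F s l k α β γ))
    (hσx : σ (Ideal.Quotient.mk (ccIdeal F s l k α β γ) (MvPolynomial.X 0)) =
      Ideal.Quotient.mk (ccIdeal F s l k α β γ)
        (MvPolynomial.C α * MvPolynomial.X 0 ^ (s - 1)))
    (hσy : σ (Ideal.Quotient.mk (ccIdeal F s l k α β γ) (MvPolynomial.X 1)) =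
      Ideal.Quotient.mk (ccIdeal F s l k α β γ)
        (MvPolynomial.C β * MvPolynomial.X 1 ^ (l - 1)))
    (hσz : σ (Ideal.Quotient.mk (ccIdeal F s l k α β γ) (MvPolynomial.X 2)) =
      Ideal.Quotient.mk (ccIdeal F s l k α β γ)
        (MvPolynomial.C γ * MvPolynomial.X 2 ^ (k - 1)))
    (C : Ideal (MvPolynomial (Fin 3) F ⧸ ccIdeal F s l k α β γ)) :
    ∀ v : Fin s × Fin l × Fin k → F,
      (∀ b : Fin s × Fin l × Fin k → F, phiV α β γ b ∈ C → dotV v b = 0) ↔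
        phiV α β γ v ∈ σ '' {f | ∀ g ∈ C, f * g = 0} := by
  have sq : ∀ e : F, e = 1 ∨ e = -1 → e * e = 1 := by
    rintro e (rfl | rfl) <;> simp
  have dot := dotV_eq_ccTrace s l k α β γ (sq α hα) (sq β hβ) (sq γ hγ) σ
    (map_ccMon s l k α β γ σ hσx hσy hσz)
  obtain ⟨px, py, pz⟩ := mk_pow_eq s l k α β γ
  have inv : ∀ r, σ (σ r) = r := by
    have h : σ.comp σ = AlgHom.id F _ := by
      apply Ideal.Quotient.algHom_ext
      apply MvPolynomial.algHom_ext
      intro i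
      fin_cases i
      · exact map_map_gen σ _ s α (sq α hα) px (hσx.trans (by rw [map_mul, map_pow]; rfl))
      · exact map_map_gen σ _ l β (sq β hβ) py (hσy.trans (by rw [map_mul, map_pow]; rfl))
      · exact map_map_gen σ _ k γ (sq γ hγ) pz (hσz.trans (by rw [map_mul, map_pow]; rfl))
    exact fun r => DFunLike.congr_fun h r
  intro v
  constructor
  · intro hv
    refine ⟨σ (phiV α β γ v), fun g hg => ?_, inv _⟩
    obtain ⟨c, hc⟩ := phiV_surjective α β γ (σ (σ (phiV α β γ v) * g))
    -- `c w` is the dot product of `c` with the basis vector at `w`; by the trace formula it equals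
    -- the dot product of `v` with the coefficient vector of a multiple of `g`.
    have hc0 : c = 0 := by
      funext w
      obtain ⟨b, hb⟩ := phiV_surjective α β γ (g * phiV α β γ (Pi.single w 1))
      have h1 := hv b (hb ▸ C.mul_mem_right _ hg)
      have h2 : dotV c (Pi.single w 1) = dotV v b := by
        rw [dot, dot, hc, hb, map_mul σ, map_mul σ, inv, mul_assoc]
      rw [h1] at h2
      simpa [dotV, Pi.single_apply] using h2
    have h0 : σ (σ (phiV α β γ v) * g) = 0 := by
      rw [← hc, hc0, phiV_eq, map_zero]
    rw [← inv (σ (phiV α β γ v) * g), h0, map_zero]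
  · rintro ⟨f, hf, hfv⟩ b hb
    rw [dot, ← hfv, ← map_mul, hf _ hb, map_zero, map_zero]
end
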